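/- arXiv:1607.06430 — 3 statements merged into one kernel-verified Lean document; each statement's English description precedes it below -/
import Mathlib

section
/- Let M be a topological monoid with multiplication •, let k ≥ 1, and let m ∈ M be a k-anchored element. Then for all based maps φ, ψ : (S^k,1) → (M,m), the pointwise product φ•ψ (the map z ↦ φ(z)•ψ(z)) is based homotopic to (φ⬝ψ)•c_m, where φ⬝ψ is the concatenation of φ and ψ in the first cube coordinate and c_m is the constant map at m. In particular, taking ψ = φ̄ (the reverse of φ in the first cube coordinate), the maps z ↦ φ(z)•φ̄(z) and z ↦ φ̄(z)•φ(z) are each based homotopic to the constant map at m•m. -/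
open scoped unitInterval Topology

/-- The pointwise product of two generalized loops (continuous maps from the cube `I^k`
constant on the boundary), in a topological monoid. -/
noncomputable def GenLoop.ptMul {M : Type*} [TopologicalSpace M] [Monoid M] [ContinuousMul M]
    {k : ℕ} {x y : M} (φ : GenLoop (Fin k) M x) (ψ : GenLoop (Fin k) M y) :
    GenLoop (Fin k) M (x * y) :=
  ⟨φ.1 * ψ.1, fun z hz => by simp [φ.2 z hz, ψ.2 z hz]⟩

/-- `m` is `k`-anchored: there is a homotopy `H` on the path component of `m` between
multiplication and opposite multiplication, whose track loop `η(t) = H(m,m,t)` acts trivially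
on `π_k(M, m*m)`. -/
def IsKAnchored {M : Type*} [TopologicalSpace M] [Monoid M] [ContinuousMul M]
    (k : ℕ) (m : M) : Prop :=
  ∃ H : C(pathComponent m × pathComponent m × I, M),
    (∀ x y : pathComponent m, H (x, y, 0) = (x : M) * y) ∧
    (∀ x y : pathComponent m, H (x, y, 1) = (y : M) * x) ∧
    ∀ F : C((Fin k → I) × I, M),
      (∀ y ∈ Cube.boundary (Fin k), ∀ t : I,
          F (y, t) = H (⟨m, mem_pathComponent_self m⟩, ⟨m, mem_pathComponent_self m⟩, t)) →
      ContinuousMap.HomotopicRel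
        ⟨fun y => F (y, 0), by fun_prop⟩
        ⟨fun y => F (y, 1), by fun_prop⟩
        (Cube.boundary (Fin k))

/-!
This is an Eckmann–Hilton argument. Up to homotopy `φ` is `φ⬝c` and `ψ` is `c⬝ψ`, and pointwise
products distribute over concatenation, so `φ•ψ ≃ (φ•c)⬝(c•ψ)`. The anchoring homotopy slides `c•ψ`
to `ψ•c` freely, its track at the basepoint being the loop `η`; since `η` acts trivially the slide
can be made based, and `(φ•c)⬝(ψ•c) = (φ⬝ψ)•(c⬝c)`, where `c⬝c ≃ c`.
-/

section Concatenation

variable {N X : Type*} [DecidableEq N] [TopologicalSpace X] {x : X}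

theorem transAt_homotopic_transAt (i : N) {f f' g g' : GenLoop N X x}
    (hf : GenLoop.Homotopic f f') (hg : GenLoop.Homotopic g g') :
    GenLoop.Homotopic (GenLoop.transAt i f g) (GenLoop.transAt i f' g') := by
  have : Nonempty N := ⟨i⟩
  have hf_class : (⟦f⟧ : HomotopyGroup N X x) = ⟦f'⟧ := Quotient.sound hf
  have hg_class : (⟦g⟧ : HomotopyGroup N X x) = ⟦g'⟧ := Quotient.sound hg
  have h : (⟦GenLoop.transAt i f g⟧ : HomotopyGroup N X x) = ⟦GenLoop.transAt i f' g'⟧ := by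
    rw [← HomotopyGroup.mul_spec, ← HomotopyGroup.mul_spec, hf_class, hg_class]
  exact Quotient.exact h

-- `HomotopyGroup.mul_spec` reverses the factors, so right units and right inverses for
-- concatenation come from left ones in the homotopy group, and vice versa.
theorem transAt_const_homotopic (i : N) (f : GenLoop N X x) :
    GenLoop.Homotopic (GenLoop.transAt i f GenLoop.const) f := by
  have : Nonempty N := ⟨i⟩
  have h : (⟦GenLoop.transAt i f GenLoop.const⟧ : HomotopyGroup N X x) = ⟦f⟧ := by
    rw [← HomotopyGroup.mul_spec, ← HomotopyGroup.one_def]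
    exact one_mul (M := HomotopyGroup N X x) _
  exact Quotient.exact h

theorem const_transAt_homotopic (i : N) (f : GenLoop N X x) :
    GenLoop.Homotopic (GenLoop.transAt i GenLoop.const f) f := by
  have : Nonempty N := ⟨i⟩
  have h : (⟦GenLoop.transAt i GenLoop.const f⟧ : HomotopyGroup N X x) = ⟦f⟧ := by
    rw [← HomotopyGroup.mul_spec, ← HomotopyGroup.one_def]
    exact mul_one (M := HomotopyGroup N X x) _
  exact Quotient.exact h

theorem transAt_symmAt_homotopic_const (i : N) (f : GenLoop N X x) :
    GenLoop.Homotopic (GenLoop.transAt i f (GenLoop.symmAt i f)) GenLoop.const := by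
  have : Nonempty N := ⟨i⟩
  have h : (⟦GenLoop.transAt i f (GenLoop.symmAt i f)⟧ : HomotopyGroup N X x) =
      ⟦GenLoop.const⟧ := by
    rw [← HomotopyGroup.mul_spec, ← HomotopyGroup.one_def, ← HomotopyGroup.inv_spec]
    exact inv_mul_cancel (G := HomotopyGroup N X x) _
  exact Quotient.exact h

theorem symmAt_transAt_homotopic_const (i : N) (f : GenLoop N X x) :
    GenLoop.Homotopic (GenLoop.transAt i (GenLoop.symmAt i f) f) GenLoop.const := by
  have : Nonempty N := ⟨i⟩
  have h : (⟦GenLoop.transAt i (GenLoop.symmAt i f) f⟧ : HomotopyGroup N X x) =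
      ⟦GenLoop.const⟧ := by
    rw [← HomotopyGroup.mul_spec, ← HomotopyGroup.one_def, ← HomotopyGroup.inv_spec]
    exact mul_inv_cancel (G := HomotopyGroup N X x) _
  exact Quotient.exact h

end Concatenation

theorem genLoop_apply_mem_pathComponent {N X : Type*} [Nonempty N] [TopologicalSpace X] {x : X}
    (f : GenLoop N X x) (z : N → I) : f z ∈ pathComponent x := by
  have cube_joined : Joined 0 z := 
    ⟨⟨⟨fun t i => t * z i, by fun_prop⟩, by ext; simp, by ext; simp⟩⟩
  have joined_zero : Joined (f 0) (f z) := cube_joined.map f.1.continuous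
  have apply_zero : f 0 = x := GenLoop.boundary f 0 ⟨Classical.arbitrary N, Or.inl rfl⟩
  rwa [apply_zero] at joined_zero

section PointwiseProduct

variable {M : Type*} [TopologicalSpace M] [Monoid M] [ContinuousMul M] {k : ℕ} {x y m : M}

theorem ptMul_homotopic_ptMul {f f' : GenLoop (Fin k) M x} {g g' : GenLoop (Fin k) M y}
    (hf : GenLoop.Homotopic f f') (hg : GenLoop.Homotopic g g') :
    GenLoop.Homotopic (GenLoop.ptMul f g) (GenLoop.ptMul f' g') := by
  obtain ⟨F⟩ := hf
  obtain ⟨G⟩ := hg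
  exact ⟨(F.prod G).compContinuousMap ⟨fun p : M × M => p.1 * p.2, continuous_mul⟩⟩

theorem transAt_ptMul_transAt (i : Fin k) (f f' : GenLoop (Fin k) M x)
    (g g' : GenLoop (Fin k) M y) :
    GenLoop.ptMul (GenLoop.transAt i f f') (GenLoop.transAt i g g') =
      GenLoop.transAt i (GenLoop.ptMul f g) (GenLoop.ptMul f' g') := by
  ext z
  change GenLoop.transAt i f f' z * GenLoop.transAt i g g' z = _
  simp only [GenLoop.transAt, GenLoop.coe_copy]
  split_ifs <;> rfl

theorem ptMul_homotopic_transAt (i : Fin k) (φ : GenLoop (Fin k) M x)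
    (ψ : GenLoop (Fin k) M y) :
    GenLoop.Homotopic (GenLoop.ptMul φ ψ)
      (GenLoop.transAt i (GenLoop.ptMul φ (GenLoop.const : GenLoop (Fin k) M y))
        (GenLoop.ptMul (GenLoop.const : GenLoop (Fin k) M x) ψ)) := by
  rw [← transAt_ptMul_transAt]
  exact ptMul_homotopic_ptMul (transAt_const_homotopic i φ).symm
    (const_transAt_homotopic i ψ).symm

theorem transAt_ptMul_const_homotopic (i : Fin k) (φ ψ : GenLoop (Fin k) M x) :
    GenLoop.Homotopic
      (GenLoop.transAt i (GenLoop.ptMul φ (GenLoop.const : GenLoop (Fin k) M y))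
        (GenLoop.ptMul ψ (GenLoop.const : GenLoop (Fin k) M y)))
      (GenLoop.ptMul (GenLoop.transAt i φ ψ) (GenLoop.const : GenLoop (Fin k) M y)) := by
  rw [← transAt_ptMul_transAt]
  exact ptMul_homotopic_ptMul (.refl _) (transAt_const_homotopic i _)

theorem ptMul_homotopic_transAt_ptMul_const (i : Fin k) (φ : GenLoop (Fin k) M m)
    {ψ : GenLoop (Fin k) M m}
    (hψ : GenLoop.Homotopic (GenLoop.ptMul (GenLoop.const : GenLoop (Fin k) M m) ψ)
      (GenLoop.ptMul ψ (GenLoop.const : GenLoop (Fin k) M m))) :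
    GenLoop.Homotopic (GenLoop.ptMul φ ψ)
      (GenLoop.ptMul (GenLoop.transAt i φ ψ) (GenLoop.const : GenLoop (Fin k) M m)) :=
  ((ptMul_homotopic_transAt i φ ψ).trans (transAt_homotopic_transAt i (.refl _) hψ)).trans
    (transAt_ptMul_const_homotopic i φ ψ)

theorem IsKAnchored.const_ptMul_homotopic (hm : IsKAnchored k m) (hk : 1 ≤ k)
    (ψ : GenLoop (Fin k) M m) :
    GenLoop.Homotopic (GenLoop.ptMul (GenLoop.const : GenLoop (Fin k) M m) ψ)
      (GenLoop.ptMul ψ (GenLoop.const : GenLoop (Fin k) M m)) := by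
  obtain ⟨H, H_zero, H_one, track_acts_trivially⟩ := hm
  have : Nonempty (Fin k) := ⟨⟨0, hk⟩⟩
  have ψ_continuous : Continuous ψ := ψ.1.continuous
  let basepoint : pathComponent m := ⟨m, mem_pathComponent_self m⟩
  let ψ' (z : Fin k → I) : pathComponent m := ⟨ψ z, genLoop_apply_mem_pathComponent ψ z⟩
  let F : C((Fin k → I) × I, M) := ⟨fun p => H (basepoint, ψ' p.1, p.2), by fun_prop⟩
  have F_boundary : ∀ z ∈ Cube.boundary (Fin k), ∀ t, F (z, t) = H (basepoint, basepoint, t) :=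
    fun z hz t => congrArg (fun p => H (basepoint, p, t)) (Subtype.ext (GenLoop.boundary ψ z hz))
  change ContinuousMap.HomotopicRel _ _ _
  convert track_acts_trivially F F_boundary using 1
  · ext z
    exact (H_zero basepoint (ψ' z)).symm
  · ext z
    exact (H_one basepoint (ψ' z)).symm

theorem ptMul_homotopic_of_isKAnchored_general (i : Fin k)
    (hcomm : ∀ χ : GenLoop (Fin k) M m,
      GenLoop.Homotopic (GenLoop.ptMul (GenLoop.const : GenLoop (Fin k) M m) χ)
        (GenLoop.ptMul χ (GenLoop.const : GenLoop (Fin k) M m)))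
    (φ ψ : GenLoop (Fin k) M m) :
    GenLoop.Homotopic (GenLoop.ptMul φ ψ)
      (GenLoop.ptMul (GenLoop.transAt i φ ψ) (GenLoop.const : GenLoop (Fin k) M m)) ∧
    GenLoop.Homotopic (GenLoop.ptMul φ (GenLoop.symmAt i φ))
      (GenLoop.const : GenLoop (Fin k) M (m * m)) ∧
    GenLoop.Homotopic (GenLoop.ptMul (GenLoop.symmAt i φ) φ)
      (GenLoop.const : GenLoop (Fin k) M (m * m)) := by
  refine ⟨ptMul_homotopic_transAt_ptMul_const i φ (hcomm ψ), ?_, ?_⟩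
  · exact (ptMul_homotopic_transAt_ptMul_const i φ (hcomm _)).trans
      (ptMul_homotopic_ptMul (transAt_symmAt_homotopic_const i φ) (.refl _))
  · exact (ptMul_homotopic_transAt_ptMul_const i _ (hcomm φ)).trans
      (ptMul_homotopic_ptMul (symmAt_transAt_homotopic_const i φ) (.refl _))

end PointwiseProduct

/-- **Eckmann–Hilton for anchored elements.** If `m` is `k`-anchored then for based maps
`φ ψ : (S^k, 1) → (M, m)` the pointwise product `φ•ψ` is based homotopic to `(φ⬝ψ)•c_m`,
where `⬝` is concatenation in the first cube coordinate; in particular `φ•φ̄` and `φ̄•φ` are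
based homotopic to the constant map at `m•m`. -/
theorem ptMul_homotopic_of_isKAnchored {M : Type*} [TopologicalSpace M] [Monoid M]
    [ContinuousMul M] {k : ℕ} (hk : 1 ≤ k) {m : M} (hm : IsKAnchored k m)
    (φ ψ : GenLoop (Fin k) M m) :
    GenLoop.Homotopic (GenLoop.ptMul φ ψ)
      (GenLoop.ptMul (GenLoop.transAt (⟨0, hk⟩ : Fin k) φ ψ)
        (GenLoop.const : GenLoop (Fin k) M m)) ∧
    GenLoop.Homotopic (GenLoop.ptMul φ (GenLoop.symmAt (⟨0, hk⟩ : Fin k) φ))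
      (GenLoop.const : GenLoop (Fin k) M (m * m)) ∧
    GenLoop.Homotopic (GenLoop.ptMul (GenLoop.symmAt (⟨0, hk⟩ : Fin k) φ) φ)
      (GenLoop.const : GenLoop (Fin k) M (m * m)) :=
  ptMul_homotopic_of_isKAnchored_general ⟨0, hk⟩ (hm.const_ptMul_homotopic hk) φ ψ
end

section
/- Let M be a topological monoid with multiplication •, let m ∈ M, let P be the path component of m in M, and let H : P × P × [0,1] → M be a continuous map with H(x,y,0) = x•y and H(x,y,1) = y•x for all x, y ∈ P. Let η(t) = H(m,m,t), a loop in M based at m•m. If the path-homotopy class of η is central in the fundamental group π₁(M, m•m), then for every pair of loops α̃, β̃ : [0,1] → M based at m, the pointwise-product loops t ↦ α̃(t)•β̃(t) and t ↦ β̃(t)•α̃(t) (both loops based at m•m) are path-homotopic (homotopic relative to their endpoints). -/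
open scoped unitInterval

/-- The pointwise product of two loops in a topological monoid. -/
noncomputable def Path.ptMul {M : Type*} [TopologicalSpace M] [Monoid M] [ContinuousMul M]
    {x y : M} (α : Path x x) (β : Path y y) : Path (x * y) (x * y) where
  toFun := fun t => α t * β t
  continuous_toFun := by fun_prop
  source' := by simp
  target' := by simp

/-!
A homotopy from `f` to `g` makes the track of the base point intertwine the loops `f ∘ γ` and
`g ∘ γ`. Applied to `f (x, y) = x * y`, `g (x, y) = y * x` and `γ = (α, β)`, this reads
`[α * β] [η] = [η] [β * α]` in the fundamental group. As `[η]` commutes with `[α * β]`, it can be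
cancelled.
-/

section

variable {X M : Type*} [TopologicalSpace X]

theorem homotopic_of_trans_homotopic_trans_left {x y z : X} {γ : Path x y} {p q : Path y z}
    (h : (γ.trans p).Homotopic (γ.trans q)) : p.Homotopic q := by
  have symm_trans_cancel (r : Path y z) : (γ.symm.trans (γ.trans r)).Homotopic r :=
    (Path.Homotopic.trans_assoc γ.symm γ r).symm.trans <|
      ((Path.Homotopic.symm_trans γ).hcomp (.refl r)).trans (Path.Homotopic.refl_trans r)
  exact (symm_trans_cancel p).symm.trans <|
    ((Path.Homotopic.refl γ.symm).hcomp h).trans (symm_trans_cancel q)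

theorem path_apply_mem_pathComponent {x y : X} (γ : Path x y) (t : I) :
    γ t ∈ pathComponent x :=
  ⟨(γ.subpath 0 t).cast γ.source.symm rfl⟩

/-- A path in `X` that stays in the set `s`, as a path in the subspace `s`. The endpoints are
taken in `s` to begin with, so that the result needs no casts. -/
def pathCodRestrict {s : Set X} {a b : s} (γ : Path (a : X) b) (hγ : ∀ t, γ t ∈ s) :
    Path a b where
  toFun t := ⟨γ t, hγ t⟩
  source' := Subtype.ext γ.source
  target' := Subtype.ext γ.target

variable [TopologicalSpace M] [Mul M] [ContinuousMul M]

theorem mul_trans_homotopic_trans_mul_swap {s t : Set M} (H : C(s × t × I, M))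
    (H0 : ∀ x y, H (x, y, 0) = (x : M) * y) (H1 : ∀ x y, H (x, y, 1) = (y : M) * x)
    {a b : s} {c d : t} {η₀ : Path (a * c : M) (c * a)} {η₁ : Path (b * d : M) (d * b)}
    (hη₀ : ∀ r, η₀ r = H (a, c, r)) (hη₁ : ∀ r, η₁ r = H (b, d, r))
    {α : Path (a : M) b} {β : Path (c : M) d} (hα : ∀ r, α r ∈ s) (hβ : ∀ r, β r ∈ t) :
    ((α.mul β).trans η₁).Homotopic (η₀.trans (β.mul α)) := by
  let f : C(s × t, M) := ⟨fun z => z.1 * z.2, by fun_prop⟩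
  let g : C(s × t, M) := ⟨fun z => z.2 * z.1, by fun_prop⟩
  let F : f.Homotopy g :=
    { toFun := fun z => H (z.2.1, z.2.2, z.1)
      map_zero_left := fun z => H0 z.1 z.2
      map_one_left := fun z => H1 z.1 z.2 }
  have track_source : F.evalAt (a, c) = η₀ := Path.ext <| funext fun r => (hη₀ r).symm
  have track_target : F.evalAt (b, d) = η₁ := Path.ext <| funext fun r => (hη₁ r).symm
  rw [← track_source, ← track_target]
  exact .map_trans_evalAt F ((pathCodRestrict α hα).prod (pathCodRestrict β hβ))

theorem ptMul_loops_homotopic_general {s : Set M} (m : s) (H : C(s × s × I, M))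
    (H0 : ∀ x y, H (x, y, 0) = (x : M) * y) (H1 : ∀ x y, H (x, y, 1) = (y : M) * x)
    {η : Path (m * m : M) (m * m)} (hη : ∀ t, η t = H (m, m, t))
    {α β : Path (m : M) m} (hα : ∀ t, α t ∈ s) (hβ : ∀ t, β t ∈ s)
    (hcomm : (η.trans (α.mul β)).Homotopic ((α.mul β).trans η)) :
    (α.mul β).Homotopic (β.mul α) :=
  homotopic_of_trans_homotopic_trans_left <|
    hcomm.trans <| mul_trans_homotopic_trans_mul_swap H H0 H1 hη hη hα hβ

end

/-- If `H` is a homotopy between multiplication and opposite multiplication on the path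
component of `m`, and the track loop `η(t) = H(m,m,t)` (a loop at `m•m`) has path-homotopy
class central in `π₁(M, m•m)`, then for all loops `α̃, β̃` based at `m`, the pointwise product
loops `α̃•β̃` and `β̃•α̃` are path-homotopic. -/
theorem ptMul_loops_homotopic {M : Type*} [TopologicalSpace M] [Monoid M] [ContinuousMul M]
    (m : M) (H : C(pathComponent m × pathComponent m × I, M))
    (H0 : ∀ x y : pathComponent m, H (x, y, 0) = (x : M) * y)
    (H1 : ∀ x y : pathComponent m, H (x, y, 1) = (y : M) * x)
    (η : Path (m * m) (m * m))
    (hη : ∀ t : I, η t = H (⟨m, mem_pathComponent_self m⟩, ⟨m, mem_pathComponent_self m⟩, t))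
    (hcentral : ∀ γ : Path (m * m) (m * m), (η.trans γ).Homotopic (γ.trans η))
    (α β : Path m m) :
    (α.ptMul β).Homotopic (β.ptMul α) :=
  -- `α.ptMul β` is definitionally equal to `α.mul β`.
  ptMul_loops_homotopic_general ⟨m, mem_pathComponent_self m⟩ H H0 H1 hη
    (path_apply_mem_pathComponent α) (path_apply_mem_pathComponent β) (hcentral (α.mul β))
end

section
/- The Heisenberg manifold, i.e., the quotient of the real Heisenberg group H(ℝ) by its discrete subgroup H(ℤ) (the coset space with the quotient topology), is a compact Hausdorff space. -/
/-- The Heisenberg group over a commutative ring `R`: upper unitriangular `3 × 3` matrices,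
identified with triples `(x, y, z)` with multiplication
`(a,b,c)·(a',b',c') = (a+a', b+b', c+c'+a·b')`. -/
@[ext]
structure Heis (R : Type*) where
  /-- the `(1,2)` entry -/
  x : R
  /-- the `(2,3)` entry -/
  y : R
  /-- the `(1,3)` entry -/
  z : R

namespace Heis

variable {R : Type*} [CommRing R]

instance : Mul (Heis R) :=
  ⟨fun p q => ⟨p.x + q.x, p.y + q.y, p.z + q.z + p.x * q.y⟩⟩

instance : One (Heis R) := ⟨⟨0, 0, 0⟩⟩

instance : Inv (Heis R) := ⟨fun p => ⟨-p.x, -p.y, -p.z + p.x * p.y⟩⟩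

@[simp] theorem mul_x (p q : Heis R) : (p * q).x = p.x + q.x := rfl
@[simp] theorem mul_y (p q : Heis R) : (p * q).y = p.y + q.y := rfl
@[simp] theorem mul_z (p q : Heis R) : (p * q).z = p.z + q.z + p.x * q.y := rfl
@[simp] theorem one_x : (1 : Heis R).x = 0 := rfl
@[simp] theorem one_y : (1 : Heis R).y = 0 := rfl
@[simp] theorem one_z : (1 : Heis R).z = 0 := rfl
@[simp] theorem inv_x (p : Heis R) : p⁻¹.x = -p.x := rfl
@[simp] theorem inv_y (p : Heis R) : p⁻¹.y = -p.y := rfl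
@[simp] theorem inv_z (p : Heis R) : p⁻¹.z = -p.z + p.x * p.y := rfl

instance : Group (Heis R) where
  mul_assoc p q r := by ext <;> simp <;> ring
  one_mul p := by ext <;> simp
  mul_one p := by ext <;> simp
  inv_mul_cancel p := by ext <;> simp

end Heis

/-- `H(ℝ)` is topologized as `ℝ³`. -/
instance : TopologicalSpace (Heis ℝ) :=
  TopologicalSpace.induced (fun p => (p.x, p.y, p.z)) inferInstance

/-- The inclusion `H(ℤ) → H(ℝ)`. -/
def Heis.castHom : Heis ℤ →* Heis ℝ where
  toFun p := ⟨(p.x : ℝ), (p.y : ℝ), (p.z : ℝ)⟩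
  map_one' := by ext <;> simp
  map_mul' p q := by ext <;> simp

/-- The discrete Heisenberg group `H(ℤ)` as a subgroup of `H(ℝ)`. -/
def Heis.HZ : Subgroup (Heis ℝ) := Heis.castHom.range

/-- The Heisenberg manifold: the coset space of `H(ℝ)` by `H(ℤ)`, with the
quotient topology. -/
abbrev HeisMan : Type := Heis ℝ ⧸ Heis.HZ

/-!
`H(ℤ)` is closed in the topological group `H(ℝ)`, being cut out by integrality of the three
continuous coordinates, and the coset space of a closed subgroup is Hausdorff. For compactness,
`(x, y, z) * (a, b, c) = (x + a, y + b, z + c + x * b)`: integers `a` and `b` bring the first two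
coordinates into `[0, 1]`, and then an integer `c` brings the third there, so every coset meets
the compact unit cube.
-/

open scoped Pointwise unitInterval

theorem compactSpace_quotient_of_mul_eq_univ {G : Type*} [Group G] [TopologicalSpace G]
    {H : Subgroup G} {K : Set G} (hK : IsCompact K) (hKH : K * (H : Set G) = Set.univ) :
    CompactSpace (G ⧸ H) := by
  have image_eq_univ : (QuotientGroup.mk : G → G ⧸ H) '' K = Set.univ := by
    apply QuotientGroup.mk_surjective.preimage_injective
    rw [QuotientGroup.preimage_image_mk_eq_mul, hKH, Set.preimage_univ]
  exact ⟨image_eq_univ ▸ hK.image QuotientGroup.continuous_mk⟩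

namespace Heis

/-- The coordinates of `H(R)`, as a bijection with `R³`. -/
def equivProd (R : Type*) : Heis R ≃ R × R × R where
  toFun p := (p.x, p.y, p.z)
  invFun t := ⟨t.1, t.2.1, t.2.2⟩

/-- The coordinates of `H(ℝ)`, as a homeomorphism with `ℝ³`. -/
def homeomorphProd : Heis ℝ ≃ₜ ℝ × ℝ × ℝ :=
  (equivProd ℝ).toHomeomorphOfIsInducing ⟨rfl⟩

@[fun_prop]
theorem continuous_x : Continuous (x : Heis ℝ → ℝ) :=
  continuous_fst.comp homeomorphProd.continuous

@[fun_prop]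
theorem continuous_y : Continuous (y : Heis ℝ → ℝ) :=
  (continuous_fst.comp continuous_snd).comp homeomorphProd.continuous

@[fun_prop]
theorem continuous_z : Continuous (z : Heis ℝ → ℝ) :=
  (continuous_snd.comp continuous_snd).comp homeomorphProd.continuous

theorem continuous_iff {X : Type*} [TopologicalSpace X] {f : X → Heis ℝ} :
    Continuous f ↔ Continuous (fun a => (f a).x) ∧ Continuous (fun a => (f a).y) ∧
      Continuous (fun a => (f a).z) := by
  rw [← homeomorphProd.comp_continuous_iff, continuous_prodMk, continuous_prodMk]
  rfl

instance : IsTopologicalGroup (Heis ℝ) where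
  continuous_mul := by
    simp only [continuous_iff, mul_x, mul_y, mul_z]
    exact ⟨by fun_prop, by fun_prop, by fun_prop⟩
  continuous_inv := by
    simp only [continuous_iff, inv_x, inv_y, inv_z]
    exact ⟨by fun_prop, by fun_prop, by fun_prop⟩

theorem mem_HZ {p : Heis ℝ} :
    p ∈ HZ ↔ p.x ∈ Set.range ((↑) : ℤ → ℝ) ∧ p.y ∈ Set.range ((↑) : ℤ → ℝ) ∧
      p.z ∈ Set.range ((↑) : ℤ → ℝ) := by
  constructor
  · rintro ⟨q, rfl⟩
    exact ⟨⟨q.x, rfl⟩, ⟨q.y, rfl⟩, ⟨q.z, rfl⟩⟩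
  · rintro ⟨⟨a, ha⟩, ⟨b, hb⟩, ⟨c, hc⟩⟩
    exact ⟨⟨a, b, c⟩, Heis.ext ha hb hc⟩

instance isClosed_HZ : IsClosed (HZ : Set (Heis ℝ)) := by
  have coe_HZ : (HZ : Set (Heis ℝ)) = x ⁻¹' Set.range ((↑) : ℤ → ℝ) ∩
      (y ⁻¹' Set.range ((↑) : ℤ → ℝ) ∩ z ⁻¹' Set.range ((↑) : ℤ → ℝ)) :=
    Set.ext fun _ => mem_HZ
  rw [coe_HZ]
  have isClosed_int := Real.isClosed_range_intCast
  exact (isClosed_int.preimage continuous_x).inter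
    ((isClosed_int.preimage continuous_y).inter (isClosed_int.preimage continuous_z))

/-- The unit cube `[0, 1]³` in `H(ℝ)`: a compact set meeting every coset of `H(ℤ)`. -/
def unitCube : Set (Heis ℝ) := homeomorphProd ⁻¹' (I ×ˢ I ×ˢ I)

theorem isCompact_unitCube : IsCompact unitCube :=
  homeomorphProd.isCompact_preimage.2 (isCompact_Icc.prod (isCompact_Icc.prod isCompact_Icc))

theorem fract_mem_unitCube (a b c : ℝ) :
    (⟨Int.fract a, Int.fract b, Int.fract c⟩ : Heis ℝ) ∈ unitCube :=
  ⟨unitInterval.fract_mem a, unitInterval.fract_mem b, unitInterval.fract_mem c⟩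

theorem fract_mul_castHom_floor (a b c : ℝ) :
    (⟨Int.fract a, Int.fract b, Int.fract c⟩ : Heis ℝ) * castHom ⟨⌊a⌋, ⌊b⌋, ⌊c⌋⟩ =
      ⟨a, b, c + Int.fract a * ⌊b⌋⟩ := by
  ext
  · exact Int.fract_add_floor a
  · exact Int.fract_add_floor b
  · exact congrArg (· + Int.fract a * ⌊b⌋) (Int.fract_add_floor c)

theorem unitCube_mul_HZ : unitCube * (HZ : Set (Heis ℝ)) = Set.univ := by
  refine Set.eq_univ_of_forall fun p => ?_
  -- The correction to `p.z` cancels the term `fract p.x * ⌊p.y⌋` created by the multiplication.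
  set w := p.z - Int.fract p.x * ⌊p.y⌋ with hw
  have factorization :
      (⟨Int.fract p.x, Int.fract p.y, Int.fract w⟩ : Heis ℝ) * castHom ⟨⌊p.x⌋, ⌊p.y⌋, ⌊w⌋⟩ = p := by
    rw [fract_mul_castHom_floor, hw, sub_add_cancel]
  exact ⟨_, fract_mem_unitCube _ _ _, _, ⟨_, rfl⟩, factorization⟩

end Heis

/-- The Heisenberg manifold `H(ℝ)/H(ℤ)` is a compact Hausdorff space. -/
theorem heisMan_compact_t2 : CompactSpace HeisMan ∧ T2Space HeisMan :=
  ⟨compactSpace_quotient_of_mul_eq_univ Heis.isCompact_unitCube Heis.unitCube_mul_HZ,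
    QuotientGroup.instT2Space⟩
end
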